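/- For the elephant random walk with memory parameter p ∈ (p_d, 1) on a Cayley graph that is the d-regular tree T_d (d ≥ 3), where p_d = (d + 1)/(2d), and for m > 2: if 2 < m < (d − 1)/(d(1 − p)) there exists C > 0 with E|Ξ_n|^m ≤ C · n^{−m·d(1−p)/(d−1)} · log n for all n ≥ 2; if m = (d − 1)/(d(1 − p)) there exists C > 0 with E|Ξ_n|^m ≤ C · n^{−1} · log n for all n ≥ 2; and if m > (d − 1)/(d(1 − p)) there exists C > 0 with E|Ξ_n|^m ≤ C · n^{−1} for all n ≥ 1. -/

import Mathlib

open MeasureTheory ProbabilityTheory Filter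

noncomputable section

/-- The Cayley graph of a group with respect to a finite set of generators. -/
def cayleyGraph {G : Type*} [Group G] (S : Finset G) : SimpleGraph G where
  Adj x y := x ≠ y ∧ (y * x⁻¹ ∈ S ∨ x * y⁻¹ ∈ S)
  symm := by
    constructor
    rintro x y ⟨h1, h2⟩
    refine ⟨h1.symm, ?_⟩
    rcases h2 with h | h
    · exact Or.inr h
    · exact Or.inl h
  loopless := ⟨fun x h => h.1 rfl⟩

/-- The elephant random walk (ERW) with memory parameter `p` on the Cayley graph of a
group `G` with respect to a symmetric generating set `S` of cardinality `d`, not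
containing the identity, whose Cayley graph is a tree (hence the `d`-regular tree
`T_d`).  The steps are `g 1, g 2, …` (the value of `g 0` is irrelevant).  The law of
the process is characterised by: `g 1` is uniform on `S`, and, conditionally on the
first `n` steps being `s 1, …, s n`, the next step `g (n+1)` equals `a ∈ S` with
probability `p * N/n + ((1-p)/(d-1)) * (n-N)/n`, where `N = #{1 ≤ k ≤ n : s k = a}`;
this is precisely the probability that the walker, recalling a uniform past epoch
`D ∈ {1, …, n}`, repeats `g D` with probability `p` and takes any given other step
with probability `(1-p)/(d-1)`. -/
structure ERW (G : Type*) [Group G] [DecidableEq G] (d : ℕ) (p : ℝ)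
    (Ω : Type*) [MeasurableSpace Ω] (P : Measure Ω) where
  S : Finset G
  card_S : S.card = d
  symm_S : ∀ s ∈ S, s⁻¹ ∈ S
  one_not_mem : (1 : G) ∉ S
  tree : (cayleyGraph S).IsTree
  g : ℕ → Ω → G
  meas_g : ∀ n a, MeasurableSet {ω | g n ω = a}
  mem_S : ∀ n, 1 ≤ n → ∀ ω, g n ω ∈ S
  init : ∀ a ∈ S, (P {ω | g 1 ω = a}).toReal = 1 / d
  update : ∀ n, 1 ≤ n → ∀ s : ℕ → G, ∀ a ∈ S,
    (P ({ω | ∀ k ∈ Finset.Icc 1 n, g k ω = s k} ∩ {ω | g (n + 1) ω = a})).toReal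
      = (p * ((((Finset.Icc 1 n).filter fun k => s k = a).card : ℝ) / n)
          + (1 - p) / ((d : ℝ) - 1)
            * (((n : ℝ) - (((Finset.Icc 1 n).filter fun k => s k = a).card : ℝ)) / n))
        * (P {ω | ∀ k ∈ Finset.Icc 1 n, g k ω = s k}).toReal

namespace ERW

variable {G : Type*} [Group G] [DecidableEq G] {d : ℕ} {p : ℝ}
  {Ω : Type*} [MeasurableSpace Ω] {P : Measure Ω}

/-- The position `w n = g n ⋯ g 1` of the walk at time `n`. -/
def pos (E : ERW G d p Ω P) : ℕ → Ω → G
  | 0 => fun _ => 1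
  | n + 1 => fun ω => E.g (n + 1) ω * E.pos n ω

/-- `Δ n`: the (word-metric) distance of the walker from the root at time `n`. -/
def dist (E : ERW G d p Ω P) (n : ℕ) (ω : Ω) : ℕ :=
  (cayleyGraph E.S).dist 1 (E.pos n ω)

/-- `N n a`: the number of `a`-steps taken by time `n`. -/
def count (E : ERW G d p Ω P) (a : G) (n : ℕ) (ω : Ω) : ℕ :=
  ((Finset.Icc 1 n).filter fun k => E.g k ω = a).card

/-- `γ n`: the unique step decreasing the distance to the root by 1
(a junk value if the walker is at the root). -/
def gammaStep (E : ERW G d p Ω P) (n : ℕ) (ω : Ω) : G :=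
  @Classical.epsilon G ⟨1⟩ fun s =>
    s ∈ E.S ∧ (cayleyGraph E.S).dist 1 (s * E.pos n ω) + 1 = E.dist n ω

/-- `ℓ n = N n (γ n)` if the walker is away from the root, and `0` otherwise. -/
def ell (E : ERW G d p Ω P) (n : ℕ) (ω : Ω) : ℕ :=
  if E.pos n ω = 1 then 0 else E.count (E.gammaStep n ω) n ω

/-- `Ξ n = (1/n) ∑_{k=0}^{n-1} (ℓ k / k - 1(Δ k > 0)/d)` (with the convention
`ℓ 0 / 0 = 0`, automatic since division by zero yields zero). -/
def Xi (E : ERW G d p Ω P) (n : ℕ) (ω : Ω) : ℝ :=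
  (1 / n) * ∑ k ∈ Finset.range n,
    ((E.ell k ω : ℝ) / k - (if 0 < E.dist k ω then 1 else 0) / d)

/-- The natural filtration `F n` generated by the steps up to time `n`. -/
def filt (E : ERW G d p Ω P) (n : ℕ) : MeasurableSpace Ω :=
  ⨆ k ∈ Finset.Icc 1 n, MeasurableSpace.comap (E.g k) ⊤

/-- `G n = E[Δ (n+1) - Δ n | F n]`. -/
def drift (E : ERW G d p Ω P) (n : ℕ) : Ω → ℝ :=
  P[fun ω => ((E.dist (n + 1) ω : ℝ) - (E.dist n ω : ℝ)) | E.filt n]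

/-- The martingale differences `Y k = Δ k - Δ (k-1) - G (k-1)`. -/
def mdiff (E : ERW G d p Ω P) (k : ℕ) (ω : Ω) : ℝ :=
  (E.dist k ω : ℝ) - (E.dist (k - 1) ω : ℝ) - E.drift (k - 1) ω

/-- The martingale `M n = ∑_{k=1}^n Y k`. -/
def mart (E : ERW G d p Ω P) (n : ℕ) (ω : Ω) : ℝ :=
  ∑ k ∈ Finset.Icc 1 n, E.mdiff k ω

end ERW

/-- The rate `r n`: `√n` in the subcritical regime `p < p_d = (d+1)/(2d)`,
`√(n / log n)` in the critical regime `p = p_d`, and `n ^ (d(1-p)/(d-1))` in the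
supercritical regime `p > p_d`. -/
def rate (p : ℝ) (d : ℕ) (n : ℕ) : ℝ :=
  if p < ((d : ℝ) + 1) / (2 * d) then Real.sqrt n
  else if p = ((d : ℝ) + 1) / (2 * d) then Real.sqrt ((n : ℝ) / Real.log n)
  else (n : ℝ) ^ ((d : ℝ) * (1 - p) / ((d : ℝ) - 1))

/-!
Put `b = (dp - 1)/(d - 1)`. Given the first `n` steps, the deviation `N_n(a) - n/d` is multiplied
on average by `1 + b/n`, so its scale is `growth b n = ∏_{k < n} (1 + b/k)`, of order `n ^ b`. One
step costs a factor `exp(θ²)` in the moment generating function, hence at scale `growth b n` the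
exponential moments stay below `exp(1 + ∑ (growth b k)⁻²)`, a convergent series because `p > p_d`
means `b > 1/2`.

Each summand of `n Ξ_n` is, up to the factor `1/k`, one of these deviations or `0`. The weights
`b growth b k / (k growth b n)` have sum at most `1`, so Jensen's inequality for `exp` carries the
exponential bound over to `n Ξ_n` at scale `growth b n`. All moments of `Ξ_n` are then at most of
order `n ^ (-m (1 - b))` with `1 - b = d(1 - p)/(d - 1)`, without any logarithm; in the last two
regimes `m (1 - b) ≥ 1`.
-/

section Exponential

lemma one_add_exp_sub_one_mul_le_exp {θ q : ℝ} (hθ : |θ| ≤ 1) (hq₀ : 0 ≤ q) (hq₁ : q ≤ 1) :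
    1 + (Real.exp θ - 1) * q ≤ Real.exp (q * θ + θ ^ 2) := by
  have hexp : Real.exp θ - 1 ≤ θ + θ ^ 2 := by
    linarith [(abs_le.1 (Real.abs_exp_sub_one_sub_id_le hθ)).2]
  calc 1 + (Real.exp θ - 1) * q ≤ 1 + (θ + θ ^ 2) * q := by gcongr
    _ ≤ (q * θ + θ ^ 2) + 1 := by nlinarith [mul_le_mul_of_nonneg_left hq₁ (sq_nonneg θ)]
    _ ≤ Real.exp (q * θ + θ ^ 2) := Real.add_one_le_exp _

lemma exp_sum_mul_le {ι : Type*} {s : Finset ι} {w : ι → ℝ} (hw : ∀ i ∈ s, 0 ≤ w i)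
    (hsum : ∑ i ∈ s, w i ≤ 1) (x : ι → ℝ) :
    Real.exp (∑ i ∈ s, w i * x i) ≤ (1 - ∑ i ∈ s, w i) + ∑ i ∈ s, w i * Real.exp (x i) := by
  simpa using convexOn_exp.map_add_sum_le (p := x) (q := 0) hw
    (sub_add_cancel 1 (∑ i ∈ s, w i)) (fun _ _ => Set.mem_univ _) (sub_nonneg.2 hsum)
    (Set.mem_univ _)

variable {Ω : Type*} [MeasurableSpace Ω] {μ : Measure Ω}

lemma integral_exp_sum_mul_le [IsProbabilityMeasure μ] {ι : Type*} {s : Finset ι} {w : ι → ℝ}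
    (hw : ∀ i ∈ s, 0 ≤ w i) (hsum : ∑ i ∈ s, w i ≤ 1) {X : ι → Ω → ℝ}
    (hX : ∀ i ∈ s, Integrable (fun ω => Real.exp (X i ω)) μ) {M : ℝ} (hM : 1 ≤ M)
    (hXM : ∀ i ∈ s, ∫ ω, Real.exp (X i ω) ∂μ ≤ M) :
    ∫ ω, Real.exp (∑ i ∈ s, w i * X i ω) ∂μ ≤ M := by
  have hint : Integrable (fun ω => ∑ i ∈ s, w i * Real.exp (X i ω)) μ :=
    integrable_finsetSum _ fun i hi => (hX i hi).const_mul _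
  calc ∫ ω, Real.exp (∑ i ∈ s, w i * X i ω) ∂μ
      ≤ ∫ ω, (1 - ∑ i ∈ s, w i) + ∑ i ∈ s, w i * Real.exp (X i ω) ∂μ :=
        integral_mono_of_nonneg (.of_forall fun _ => (Real.exp_pos _).le)
          ((integrable_const _).add hint)
          (.of_forall fun ω => exp_sum_mul_le hw hsum fun i => X i ω)
    _ = (1 - ∑ i ∈ s, w i) + ∑ i ∈ s, w i * ∫ ω, Real.exp (X i ω) ∂μ := by
        rw [integral_add (integrable_const _) hint,
          integral_finsetSum _ fun i hi => (hX i hi).const_mul _]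
        simp only [integral_const, probReal_univ, one_smul, integral_const_mul]
    _ ≤ (1 - ∑ i ∈ s, w i) * M + ∑ i ∈ s, w i * M := by
        gcongr with i hi
        · exact le_mul_of_one_le_right (sub_nonneg.2 hsum) hM
        · exact hw i hi
        · exact hXM i hi
    _ = M := by rw [← Finset.sum_mul]; ring

lemma integral_abs_rpow_le_mul_integral_exp {X : Ω → ℝ} {c m : ℝ} (hc : 0 < c) (hm : 0 ≤ m)
    (hX : Integrable (fun ω => Real.exp (c * |X ω|)) μ) :
    ∫ ω, |X ω| ^ m ∂μ ≤ (m / c) ^ m * ∫ ω, Real.exp (c * |X ω|) ∂μ := by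
  rw [← integral_const_mul]
  refine integral_mono_of_nonneg (.of_forall fun _ => by positivity) (hX.const_mul _)
    (.of_forall fun ω => ?_)
  simpa only [abs_of_pos hc] using rpow_abs_le_mul_exp_abs (X ω) hm hc.ne'

lemma integral_eq_sum_setIntegral_fiber {ι F : Type*} [Fintype ι] [NormedAddCommGroup F]
    [NormedSpace ℝ F] {X : Ω → ι} (hX : ∀ t, MeasurableSet (X ⁻¹' {t}))
    {f : Ω → F} (hf : Integrable f μ) :
    ∫ ω, f ω ∂μ = ∑ t, ∫ ω in X ⁻¹' {t}, f ω ∂μ := by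
  have hunion : ⋃ t, X ⁻¹' {t} = Set.univ :=
    Set.iUnion_eq_univ_iff.2 fun ω => ⟨X ω, rfl⟩
  rw [← setIntegral_univ, ← hunion, integral_iUnion_fintype hX
    (fun s t hst => (Set.disjoint_singleton.2 hst).preimage X) fun _ => hf.integrableOn]

end Exponential

section Distance

lemma exists_adj_dist_add_one_eq {V : Type*} {H : SimpleGraph V} (hH : H.Connected) {u v : V}
    (huv : u ≠ v) : ∃ x, H.Adj u x ∧ H.dist x v + 1 = H.dist u v := by
  obtain ⟨walk, hlength⟩ := hH.exists_walk_length_eq_dist u v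
  cases walk with
  | nil => exact absurd rfl huv
  | @cons _ x _ hadj tail =>
    have htail : H.dist x v ≤ tail.length := SimpleGraph.dist_le tail
    have htriangle : H.dist u v ≤ H.dist u x + H.dist x v := hH.dist_triangle
    rw [SimpleGraph.dist_eq_one_iff_adj.2 hadj] at htriangle
    rw [SimpleGraph.Walk.length_cons] at hlength
    exact ⟨x, hadj, by omega⟩

lemma exists_mem_dist_mul_add_one_eq {G : Type*} [Group G] {S : Finset G}
    (hS : ∀ s ∈ S, s⁻¹ ∈ S) (hconn : (cayleyGraph S).Connected) {x : G} (hx : x ≠ 1) :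
    ∃ s ∈ S, (cayleyGraph S).dist 1 (s * x) + 1 = (cayleyGraph S).dist 1 x := by
  obtain ⟨y, hadj, hdist⟩ := exists_adj_dist_add_one_eq hconn hx
  have hmem : y * x⁻¹ ∈ S := by
    rcases hadj.2 with h | h
    · exact h
    · simpa using hS _ h
  refine ⟨y * x⁻¹, hmem, ?_⟩
  rwa [inv_mul_cancel_right, SimpleGraph.dist_comm, SimpleGraph.dist_comm (v := x)]

end Distance

section Asymptotics

variable {f : ℕ → ℝ}

lemma exists_le_mul_log {u : ℕ → ℝ} (hu : ∀ n, 0 ≤ u n)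
    (h : ∃ C : ℝ, 0 < C ∧ ∀ n : ℕ, 1 ≤ n → f n ≤ C * u n) :
    ∃ C : ℝ, 0 < C ∧ ∀ n : ℕ, 2 ≤ n → f n ≤ C * u n * Real.log n := by
  obtain ⟨C, hC, hle⟩ := h
  have hlog2 : 0 < Real.log 2 := Real.log_pos one_lt_two
  refine ⟨C / Real.log 2, by positivity, fun n hn => ?_⟩
  have hlog : Real.log 2 ≤ Real.log n := Real.log_le_log two_pos (by exact_mod_cast hn)
  calc f n ≤ C * u n := hle n (by omega)
    _ ≤ C * u n * (Real.log n / Real.log 2) :=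
        le_mul_of_one_le_right (mul_nonneg hC.le (hu n)) ((one_le_div hlog2).2 hlog)
    _ = C / Real.log 2 * u n * Real.log n := by ring

lemma exists_le_mul_inv_of_exists_le_mul_rpow_neg {β : ℝ} (hβ : 1 ≤ β)
    (h : ∃ C : ℝ, 0 < C ∧ ∀ n : ℕ, 1 ≤ n → f n ≤ C * (n : ℝ) ^ (-β)) :
    ∃ C : ℝ, 0 < C ∧ ∀ n : ℕ, 1 ≤ n → f n ≤ C * (n : ℝ)⁻¹ := by
  obtain ⟨C, hC, hle⟩ := h
  refine ⟨C, hC, fun n hn => (hle n hn).trans ?_⟩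
  rw [← Real.rpow_neg_one]
  gcongr
  exact_mod_cast hn

end Asymptotics

namespace ERW

/-- The growth exponent `(dp - 1)/(d - 1)` of the fluctuations of the step counts: given the
first `n` steps, the deviation `N_n(a) - n/d` is multiplied on average by
`1 + memoryExponent d p / n` at the next step. -/
def memoryExponent (d : ℕ) (p : ℝ) : ℝ := (d * p - 1) / ((d : ℝ) - 1)

lemma one_sub_memoryExponent {d : ℕ} (hd : 2 ≤ d) (p : ℝ) :
    1 - memoryExponent d p = d * (1 - p) / ((d : ℝ) - 1) := by
  have hd' : (d : ℝ) - 1 ≠ 0 := sub_ne_zero.2 (by exact_mod_cast (by omega : d ≠ 1))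
  rw [memoryExponent, eq_div_iff hd', sub_mul, div_mul_cancel₀ _ hd']
  ring

lemma memoryExponent_le_one {d : ℕ} (hd : 2 ≤ d) {p : ℝ} (hp : p ≤ 1) :
    memoryExponent d p ≤ 1 := by
  have hd' : (2 : ℝ) ≤ d := by exact_mod_cast hd
  rw [← sub_nonneg, one_sub_memoryExponent hd]
  exact div_nonneg (mul_nonneg (by linarith) (by linarith)) (by linarith)

lemma half_lt_memoryExponent {d : ℕ} (hd : 2 ≤ d) {p : ℝ}
    (hp : ((d : ℝ) + 1) / (2 * d) < p) : 1 / 2 < memoryExponent d p := by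
  have hd' : (2 : ℝ) ≤ d := by exact_mod_cast hd
  rw [div_lt_iff₀ (by linarith)] at hp
  rw [memoryExponent, lt_div_iff₀ (by linarith)]
  linarith

/-- The product `∏_{k < n} (1 + b/k)`, the scale of the fluctuations of the step counts, of
order `n ^ b`. The factor at `k = 0` is `1`, since `b / 0 = 0`. -/
def growth (b : ℝ) (n : ℕ) : ℝ := ∏ k ∈ Finset.range n, (1 + b / k)

section Growth

variable {b : ℝ}

@[simp] lemma growth_zero (b : ℝ) : growth b 0 = 1 := Finset.prod_range_zero _

@[simp] lemma growth_one (b : ℝ) : growth b 1 = 1 := by simp [growth]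

lemma growth_succ (b : ℝ) (n : ℕ) : growth b (n + 1) = growth b n * (1 + b / n) :=
  Finset.prod_range_succ _ _

lemma one_le_growth (hb : 0 ≤ b) (n : ℕ) : 1 ≤ growth b n :=
  Finset.prod_induction _ (1 ≤ ·) (fun _ _ => one_le_mul_of_one_le_of_one_le) le_rfl
    fun _ _ => le_add_of_nonneg_right (by positivity)

lemma growth_pos (hb : 0 ≤ b) (n : ℕ) : 0 < growth b n :=
  one_pos.trans_le (one_le_growth hb n)

lemma abs_div_growth_le_one (hb : 0 ≤ b) (n : ℕ) {σ : ℝ} (hσ : |σ| ≤ 1) :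
    |σ / growth b n| ≤ 1 := by
  rw [abs_div, abs_of_pos (growth_pos hb n)]
  exact div_le_one_of_le₀ (hσ.trans (one_le_growth hb n)) (growth_pos hb n).le

lemma sum_mul_growth_div (b : ℝ) (n : ℕ) :
    ∑ k ∈ Finset.range n, b * (growth b k / k) = growth b n - 1 := by
  rw [← growth_zero b, ← Finset.sum_range_sub (growth b)]
  refine Finset.sum_congr rfl fun k _ => ?_
  rw [growth_succ]
  ring

lemma rpow_le_growth (hb₀ : 0 ≤ b) (hb₁ : b ≤ 1) {n : ℕ} (hn : 1 ≤ n) :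
    (n : ℝ) ^ b ≤ growth b n := by
  induction n, hn using Nat.le_induction with
  | base => simp
  | succ n hn ih =>
    have hn' : (0 : ℝ) < n := by exact_mod_cast hn
    have hbernoulli : (1 + 1 / (n : ℝ)) ^ b ≤ 1 + b / n := by
      have hneg : -1 ≤ 1 / (n : ℝ) := neg_one_lt_zero.le.trans (by positivity)
      simpa only [mul_one_div] using rpow_one_add_le_one_add_mul_self hneg hb₀ hb₁
    calc ((n + 1 : ℕ) : ℝ) ^ b = (n : ℝ) ^ b * (1 + 1 / (n : ℝ)) ^ b := by
          rw [← Real.mul_rpow hn'.le (by positivity), mul_add, mul_one_div_cancel hn'.ne',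
            mul_one, Nat.cast_succ]
      _ ≤ growth b n * (1 + b / n) :=
          mul_le_mul ih hbernoulli (by positivity) (growth_pos hb₀ n).le
      _ = growth b (n + 1) := (growth_succ b n).symm

lemma growth_succ_le_exp_harmonic (hb : 0 ≤ b) (n : ℕ) :
    growth b (n + 1) ≤ Real.exp (b * harmonic n) := by
  induction n with
  | zero => simp
  | succ n ih =>
    calc growth b (n + 1 + 1) = growth b (n + 1) * (b / (n + 1 : ℕ) + 1) := by
          rw [growth_succ, add_comm 1]
      _ ≤ Real.exp (b * harmonic n) * Real.exp (b / (n + 1 : ℕ)) := by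
          gcongr
          exact Real.add_one_le_exp _
      _ = Real.exp (b * harmonic (n + 1)) := by
          rw [← Real.exp_add, harmonic_succ]
          push_cast
          ring_nf

lemma growth_le_exp_mul_rpow (hb : 0 ≤ b) {n : ℕ} (hn : 1 ≤ n) :
    growth b n ≤ Real.exp b * (n : ℝ) ^ b := by
  have hn' : (0 : ℝ) < n := by exact_mod_cast hn
  calc growth b n ≤ growth b (n + 1) := by
        rw [growth_succ]
        exact le_mul_of_one_le_right (growth_pos hb n).le
          (le_add_of_nonneg_right (by positivity))
    _ ≤ Real.exp (b * harmonic n) := growth_succ_le_exp_harmonic hb n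
    _ ≤ Real.exp (b * (1 + Real.log n)) := by
        gcongr
        exact harmonic_le_one_add_log n
    _ = Real.exp b * (n : ℝ) ^ b := by
        rw [Real.rpow_def_of_pos hn', ← Real.exp_add]
        ring_nf

lemma summable_sq_inv_growth (hb₀ : 1 / 2 < b) (hb₁ : b ≤ 1) :
    Summable fun n => (growth b n)⁻¹ ^ 2 := by
  have hrpow : Summable fun n : ℕ => ((n : ℝ) ^ (2 * b))⁻¹ :=
    Real.summable_nat_rpow_inv.2 (by linarith)
  refine (summable_nat_add_iff 1).1 (((summable_nat_add_iff 1).2 hrpow).of_nonneg_of_le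
    (fun _ => by positivity) fun n => ?_)
  rw [mul_comm, Real.rpow_mul (by positivity), Real.rpow_two, inv_pow]
  gcongr
  exact rpow_le_growth (by linarith) hb₁ n.succ_pos

end Growth

variable {G : Type*} [Group G] [DecidableEq G] {d : ℕ} {p : ℝ}
  {Ω : Type*} [MeasurableSpace Ω] {P : Measure Ω}

/-- The first `n` steps of the walk, as a random element of a finite set. -/
def steps (E : ERW G d p Ω P) (n : ℕ) (ω : Ω) : Finset.Icc 1 n → E.S :=
  fun k => ⟨E.g k ω, E.mem_S k (Finset.mem_Icc.1 k.2).1 ω⟩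

/-- The centred step count `N_n(a) - n/d`. -/
def centeredCount (E : ERW G d p Ω P) (a : G) (n : ℕ) (ω : Ω) : ℝ :=
  E.count a n ω - n / d

/-- The conditional probability, given the first `n` steps, that the next step is `a`.
It is meaningful for `1 ≤ n` only: the formula gives `0` for `n = 0`. -/
def stepProb (E : ERW G d p Ω P) (a : G) (n : ℕ) (ω : Ω) : ℝ :=
  p * ((E.count a n ω : ℝ) / n)
    + (1 - p) / ((d : ℝ) - 1) * (((n : ℝ) - (E.count a n ω : ℝ)) / n)

/-- The `k`-th summand `ℓ_k/k - 1(Δ_k > 0)/d` of `n Ξ_n`. -/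
def XiTerm (E : ERW G d p Ω P) (k : ℕ) (ω : Ω) : ℝ :=
  (E.ell k ω : ℝ) / k - (if 0 < E.dist k ω then 1 else 0) / d

section Steps

variable (E : ERW G d p Ω P)

lemma steps_eq_iff {n : ℕ} {ω ω' : Ω} :
    E.steps n ω = E.steps n ω' ↔ ∀ k ∈ Finset.Icc 1 n, E.g k ω = E.g k ω' := by
  simp only [steps, funext_iff, Subtype.forall, Subtype.mk.injEq]

lemma factorsThrough_steps_of_le {k n : ℕ} (hkn : k ≤ n) :
    (E.steps k).FactorsThrough (E.steps n) := fun _ _ h =>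
  E.steps_eq_iff.2 fun j hj => E.steps_eq_iff.1 h j (Finset.Icc_subset_Icc_right hkn hj)

lemma factorsThrough_count (a : G) (n : ℕ) : (E.count a n).FactorsThrough (E.steps n) :=
  fun ω ω' h => by
    unfold count
    rw [Finset.filter_congr fun k hk => by rw [E.steps_eq_iff.1 h k hk]]

lemma factorsThrough_pos (n : ℕ) : (E.pos n).FactorsThrough (E.steps n) := by
  induction n with
  | zero => exact fun _ _ _ => rfl
  | succ n ih =>
    intro ω ω' h
    have hstep : E.g (n + 1) ω = E.g (n + 1) ω' := E.steps_eq_iff.1 h _ (by simp)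
    have hpos : E.pos n ω = E.pos n ω' := ih (E.factorsThrough_steps_of_le n.le_succ h)
    simp only [pos, hstep, hpos]

lemma factorsThrough_XiTerm (n : ℕ) : (E.XiTerm n).FactorsThrough (E.steps n) :=
  fun ω ω' h => by
    have hpos := E.factorsThrough_pos n h
    have hdist : E.dist n ω = E.dist n ω' := by rw [dist, dist, hpos]
    have hgamma : E.gammaStep n ω = E.gammaStep n ω' := by rw [gammaStep, gammaStep, hpos, hdist]
    have hell : E.ell n ω = E.ell n ω' := by
      simp only [ell, hpos, hgamma, E.factorsThrough_count _ n h]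
    rw [XiTerm, XiTerm, hell, hdist]

lemma factorsThrough_Xi (n : ℕ) : (E.Xi n).FactorsThrough (E.steps n) :=
  fun ω ω' h => by
    have hterm : ∀ k ∈ Finset.range n, E.XiTerm k ω = E.XiTerm k ω' := fun k hk =>
      E.factorsThrough_XiTerm k
        (E.factorsThrough_steps_of_le (Finset.mem_range.1 hk).le h)
    exact congrArg ((1 / n : ℝ) * ·) (Finset.sum_congr rfl hterm)

lemma measurableSet_steps_fiber (n : ℕ) (t : Finset.Icc 1 n → E.S) :
    MeasurableSet (E.steps n ⁻¹' {t}) := by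
  have hfiber : E.steps n ⁻¹' {t} = ⋂ k : Finset.Icc 1 n, {ω | E.g k ω = t k} := by
    ext ω
    simp only [steps, Set.mem_preimage, Set.mem_singleton_iff, funext_iff, Subtype.ext_iff,
      Set.mem_iInter, Set.mem_ofPred_eq]
  rw [hfiber]
  exact MeasurableSet.iInter fun k => E.meas_g _ _

end Steps

section Count

variable (E : ERW G d p Ω P)

lemma count_succ (a : G) (n : ℕ) (ω : Ω) :
    E.count a (n + 1) ω = E.count a n ω + if E.g (n + 1) ω = a then 1 else 0 := by
  simp only [count, Finset.card_filter, Finset.sum_Icc_succ_top (Nat.le_add_left 1 n)]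

lemma count_le (a : G) (n : ℕ) (ω : Ω) : E.count a n ω ≤ n := by
  simpa [count] using Finset.card_filter_le (Finset.Icc 1 n) fun k => E.g k ω = a

lemma centeredCount_succ (a : G) (n : ℕ) (ω : Ω) :
    E.centeredCount a (n + 1) ω
      = E.centeredCount a n ω - 1 / d + if E.g (n + 1) ω = a then 1 else 0 := by
  rw [centeredCount, centeredCount, E.count_succ]
  push_cast
  ring

lemma abs_centeredCount_le (a : G) (n : ℕ) (ω : Ω) : |E.centeredCount a n ω| ≤ n := by
  have hd : 1 ≤ d := E.card_S ▸ Finset.card_pos.2 ⟨_, E.mem_S 1 le_rfl ω⟩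
  exact abs_sub_le_of_nonneg_of_le (by positivity) (by exact_mod_cast E.count_le a n ω)
    (by positivity) (div_le_self n.cast_nonneg (by exact_mod_cast hd))

lemma stepProb_mem_Icc (hd : 2 ≤ d) (hp₀ : 0 ≤ p) (hp₁ : p ≤ 1) (a : G) (n : ℕ) (ω : Ω) :
    E.stepProb a n ω ∈ Set.Icc 0 1 := by
  have hd' : (2 : ℝ) ≤ d := by exact_mod_cast hd
  have hcount : (E.count a n ω : ℝ) ≤ n := by exact_mod_cast E.count_le a n ω
  have hother₀ : 0 ≤ (1 - p) / ((d : ℝ) - 1) := div_nonneg (by linarith) (by linarith)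
  have hother₁ : (1 - p) / ((d : ℝ) - 1) ≤ 1 := (div_le_one (by linarith)).2 (by linarith)
  have hrest : 0 ≤ ((n : ℝ) - E.count a n ω) / n := div_nonneg (by linarith) (by positivity)
  refine ⟨add_nonneg (by positivity) (mul_nonneg hother₀ hrest), ?_⟩
  calc E.stepProb a n ω ≤ 1 * (E.count a n ω / n) + 1 * ((n - E.count a n ω) / n) := by
        unfold stepProb
        gcongr
    _ = n / n := by ring
    _ ≤ 1 := div_self_le_one _

lemma stepProb_eq (hd : 2 ≤ d) (a : G) {n : ℕ} (hn : 1 ≤ n) (ω : Ω) :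
    E.stepProb a n ω = 1 / d + memoryExponent d p / n * E.centeredCount a n ω := by
  have hd' : (2 : ℝ) ≤ d := by exact_mod_cast hd
  have hd₁ : (d : ℝ) - 1 ≠ 0 := by linarith
  rw [stepProb, memoryExponent, centeredCount]
  field_simp
  ring

end Count

section XiTerm

variable (E : ERW G d p Ω P)

lemma gammaStep_mem_S {n : ℕ} {ω : Ω} (h : E.pos n ω ≠ 1) : E.gammaStep n ω ∈ E.S :=
  (Classical.epsilon_spec (exists_mem_dist_mul_add_one_eq E.symm_S E.tree.connected h)).1

lemma exists_mul_abs_XiTerm_le (k : ℕ) (ω : Ω) :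
    ∃ a ∈ E.S, k * |E.XiTerm k ω| ≤ |E.centeredCount a k ω| := by
  by_cases h : E.pos k ω = 1
  · have hterm : E.XiTerm k ω = 0 := by simp [XiTerm, ell, dist, h]
    refine ⟨E.g 1 ω, E.mem_S 1 le_rfl ω, ?_⟩
    rw [hterm, abs_zero, mul_zero]
    exact abs_nonneg _
  · have hk : (k : ℝ) ≠ 0 := Nat.cast_ne_zero.2 fun hk => h (by rw [hk, pos])
    have hdist : 0 < E.dist k ω := E.tree.connected.pos_dist_of_ne (Ne.symm h)
    have hterm : k * E.XiTerm k ω = E.centeredCount (E.gammaStep k ω) k ω := by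
      rw [XiTerm, ell, if_neg h, if_pos hdist, centeredCount, mul_sub, mul_div_cancel₀ _ hk,
        mul_one_div]
    refine ⟨E.gammaStep k ω, E.gammaStep_mem_S h, ?_⟩
    rw [← hterm, abs_mul, Nat.abs_cast]

lemma XiTerm_zero (ω : Ω) : E.XiTerm 0 ω = 0 := by
  simp [XiTerm, dist, pos]

lemma mul_Xi (n : ℕ) (ω : Ω) : n * E.Xi n ω = ∑ k ∈ Finset.range n, E.XiTerm k ω := by
  rcases Nat.eq_zero_or_pos n with rfl | hn
  · simp
  · rw [Xi, ← mul_assoc, mul_one_div_cancel (by positivity), one_mul]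
    rfl

lemma mul_abs_Xi_le (n : ℕ) (ω : Ω) :
    n * |E.Xi n ω| ≤ ∑ k ∈ Finset.range n, |E.XiTerm k ω| := by
  calc n * |E.Xi n ω| = |n * E.Xi n ω| := by rw [abs_mul, Nat.abs_cast]
    _ ≤ ∑ k ∈ Finset.range n, |E.XiTerm k ω| := by
        rw [E.mul_Xi]
        exact Finset.abs_sum_le_sum_abs _ _

lemma mul_abs_Xi_div_growth_le {b : ℝ} (hb : 0 ≤ b) (n : ℕ) (ω : Ω) :
    b * n / growth b n * |E.Xi n ω| ≤ ∑ k ∈ Finset.range n,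
      b * (growth b k / k) / growth b n * (k * |E.XiTerm k ω| / growth b k) := by
  have hcancel : ∀ k, growth b k / k * (k * |E.XiTerm k ω| / growth b k) = |E.XiTerm k ω| := by
    intro k
    have := (growth_pos hb k).ne'
    rcases Nat.eq_zero_or_pos k with rfl | hk
    · simp [XiTerm_zero]
    · field_simp
  calc b * n / growth b n * |E.Xi n ω|
      = b / growth b n * (n * |E.Xi n ω|) := by ring
    _ ≤ b / growth b n * ∑ k ∈ Finset.range n, |E.XiTerm k ω| :=
        mul_le_mul_of_nonneg_left (E.mul_abs_Xi_le n ω) (div_nonneg hb (growth_pos hb n).le)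
    _ = _ := by
        rw [Finset.mul_sum]
        refine Finset.sum_congr rfl fun k _ => ?_
        rw [mul_div_right_comm, mul_assoc, hcancel]

end XiTerm

section FiniteMeasure

variable [IsFiniteMeasure P] (E : ERW G d p Ω P)

lemma integrable_of_factorsThrough {n : ℕ} {f : Ω → ℝ} (hf : f.FactorsThrough (E.steps n)) :
    Integrable f P := by
  obtain ⟨F, rfl⟩ := (Function.factorsThrough_iff f).1 hf
  let : MeasurableSpace (Finset.Icc 1 n → E.S) := ⊤
  have hsteps : Measurable (E.steps n) := measurable_to_countable' (E.measurableSet_steps_fiber n)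
  exact Integrable.of_finite.comp_measurable hsteps

lemma integrable_comp_centeredCount (φ : ℝ → ℝ) (a : G) (n : ℕ) :
    Integrable (fun ω => φ (E.centeredCount a n ω)) P :=
  E.integrable_of_factorsThrough (n := n) fun ω ω' h => by
    simp only [centeredCount, E.factorsThrough_count a n h]

lemma integrable_comp_XiTerm (φ : ℝ → ℝ) (k : ℕ) :
    Integrable (fun ω => φ (E.XiTerm k ω)) P :=
  E.integrable_of_factorsThrough ((E.factorsThrough_XiTerm k).comp_left φ)

lemma integrable_comp_Xi (φ : ℝ → ℝ) (n : ℕ) : Integrable (fun ω => φ (E.Xi n ω)) P :=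
  E.integrable_of_factorsThrough ((E.factorsThrough_Xi n).comp_left φ)

lemma setIntegral_step_eq {a : G} (ha : a ∈ E.S) {n : ℕ} (hn : 1 ≤ n) {f : Ω → ℝ}
    (hf : f.FactorsThrough (E.steps n)) :
    ∫ ω in {ω | E.g (n + 1) ω = a}, f ω ∂P = ∫ ω, E.stepProb a n ω * f ω ∂P := by
  have hcount := E.factorsThrough_count a n
  have hqf : (fun ω => E.stepProb a n ω * f ω).FactorsThrough (E.steps n) :=
    fun ω ω' h => by simp only [stepProb, hcount h, hf h]
  have hmeas := E.measurableSet_steps_fiber n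
  rw [integral_eq_sum_setIntegral_fiber hmeas (E.integrable_of_factorsThrough hf).integrableOn,
    integral_eq_sum_setIntegral_fiber hmeas (E.integrable_of_factorsThrough hqf)]
  refine Finset.sum_congr rfl fun t _ => ?_
  rcases (E.steps n ⁻¹' {t}).eq_empty_or_nonempty with hempty | ⟨ω₀, rfl⟩
  · simp [hempty]
  have hfiber : E.steps n ⁻¹' {E.steps n ω₀} = {ω | ∀ k ∈ Finset.Icc 1 n, E.g k ω = E.g k ω₀} :=
    Set.ext fun ω => E.steps_eq_iff
  have hupdate : P.real (E.steps n ⁻¹' {E.steps n ω₀} ∩ {ω | E.g (n + 1) ω = a})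
      = E.stepProb a n ω₀ * P.real (E.steps n ⁻¹' {E.steps n ω₀}) := by
    rw [hfiber]
    exact E.update n hn (fun k => E.g k ω₀) a ha
  rw [setIntegral_congr_fun (hmeas _) fun ω hω => hf hω,
    setIntegral_congr_fun (hmeas _) fun ω hω => hqf hω, setIntegral_const, setIntegral_const,
    measureReal_restrict_apply (hmeas _), hupdate, smul_eq_mul, smul_eq_mul]
  ring

lemma mgf_centeredCount_succ {a : G} (ha : a ∈ E.S) {n : ℕ} (hn : 1 ≤ n) (θ : ℝ) :
    mgf (E.centeredCount a (n + 1)) P θ = ∫ ω, (1 + (Real.exp θ - 1) * E.stepProb a n ω)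
      * Real.exp (θ * (E.centeredCount a n ω - 1 / d)) ∂P := by
  set f : Ω → ℝ := fun ω => Real.exp (θ * (E.centeredCount a n ω - 1 / d)) with hf
  set A : Set Ω := {ω | E.g (n + 1) ω = a}
  have hcount := E.factorsThrough_count a n
  have hf_steps : f.FactorsThrough (E.steps n) :=
    fun ω ω' h => by simp only [hf, centeredCount, hcount h]
  have hf_int : Integrable f P := E.integrable_of_factorsThrough hf_steps
  have hqf_int : Integrable (fun ω => E.stepProb a n ω * f ω) P :=
    E.integrable_of_factorsThrough (n := n) fun ω ω' h => by
      simp only [stepProb, hcount h, hf_steps h]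
  have hsplit : ∀ ω, Real.exp (θ * E.centeredCount a (n + 1) ω)
      = f ω + (Real.exp θ - 1) * A.indicator f ω := by
    intro ω
    rw [E.centeredCount_succ]
    by_cases h : E.g (n + 1) ω = a
    · rw [if_pos h, Set.indicator_of_mem (show ω ∈ A from h), mul_add, mul_one, Real.exp_add]
      ring
    · rw [if_neg h, Set.indicator_of_notMem (show ω ∉ A from h), add_zero, mul_zero, add_zero]
  calc mgf (E.centeredCount a (n + 1)) P θ
      = ∫ ω, f ω + (Real.exp θ - 1) * A.indicator f ω ∂P :=
        integral_congr_ae (.of_forall hsplit)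
    _ = ∫ ω, f ω ∂P + (Real.exp θ - 1) * ∫ ω, E.stepProb a n ω * f ω ∂P := by
        rw [integral_add hf_int ((hf_int.indicator (E.meas_g _ _)).const_mul _),
          integral_const_mul, integral_indicator (E.meas_g _ _),
          E.setIntegral_step_eq ha hn hf_steps]
    _ = ∫ ω, (1 + (Real.exp θ - 1) * E.stepProb a n ω) * f ω ∂P := by
        rw [← integral_const_mul, ← integral_add hf_int (hqf_int.const_mul _)]
        exact integral_congr_ae (.of_forall fun ω => by ring)

lemma mgf_centeredCount_succ_le (hd : 2 ≤ d) (hp₀ : 0 ≤ p) (hp₁ : p ≤ 1) {a : G} (ha : a ∈ E.S)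
    {n : ℕ} (hn : 1 ≤ n) {θ : ℝ} (hθ : |θ| ≤ 1) :
    mgf (E.centeredCount a (n + 1)) P θ
      ≤ Real.exp (θ ^ 2) * mgf (E.centeredCount a n) P (θ * (1 + memoryExponent d p / n)) := by
  rw [E.mgf_centeredCount_succ ha hn, mgf, ← integral_const_mul]
  refine integral_mono_of_nonneg (.of_forall fun ω => ?_)
    ((E.integrable_comp_centeredCount (fun x => Real.exp (_ * x)) a n).const_mul _)
    (.of_forall fun ω => ?_)
  all_goals obtain ⟨hq₀, hq₁⟩ := E.stepProb_mem_Icc hd hp₀ hp₁ a n ω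
  · have : 0 ≤ 1 + (Real.exp θ - 1) * E.stepProb a n ω := by
      nlinarith [mul_nonneg (Real.exp_pos θ).le hq₀]
    positivity
  calc (1 + (Real.exp θ - 1) * E.stepProb a n ω)
        * Real.exp (θ * (E.centeredCount a n ω - 1 / d))
      ≤ Real.exp (E.stepProb a n ω * θ + θ ^ 2)
        * Real.exp (θ * (E.centeredCount a n ω - 1 / d)) := by
        gcongr
        exact one_add_exp_sub_one_mul_le_exp hθ hq₀ hq₁
    _ = Real.exp (θ ^ 2)
        * Real.exp (θ * (1 + memoryExponent d p / n) * E.centeredCount a n ω) := by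
        rw [← Real.exp_add, ← Real.exp_add, E.stepProb_eq hd a hn]
        ring_nf

lemma mgf_centeredCount_div_growth_succ_le (hd : 2 ≤ d) (hp₀ : 0 ≤ p) (hp₁ : p ≤ 1)
    (hb : 0 ≤ memoryExponent d p) {a : G} (ha : a ∈ E.S) {n : ℕ} (hn : 1 ≤ n) {σ : ℝ}
    (hσ : |σ| ≤ 1) :
    mgf (E.centeredCount a (n + 1)) P (σ / growth (memoryExponent d p) (n + 1))
      ≤ Real.exp ((growth (memoryExponent d p) (n + 1))⁻¹ ^ 2)
        * mgf (E.centeredCount a n) P (σ / growth (memoryExponent d p) n) := by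
  set b := memoryExponent d p
  have hshift : σ / growth b (n + 1) * (1 + b / n) = σ / growth b n := by
    have := (growth_pos hb n).ne'
    have : 1 + b / n ≠ 0 := by positivity
    rw [growth_succ]
    field_simp
  have hsq : (σ / growth b (n + 1)) ^ 2 ≤ (growth b (n + 1))⁻¹ ^ 2 := by
    rw [div_eq_mul_inv, mul_pow]
    exact mul_le_of_le_one_left (sq_nonneg _) ((sq_le_one_iff_abs_le_one σ).2 hσ)
  calc mgf (E.centeredCount a (n + 1)) P (σ / growth b (n + 1))
      ≤ Real.exp ((σ / growth b (n + 1)) ^ 2)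
        * mgf (E.centeredCount a n) P (σ / growth b n) := by
        rw [← hshift]
        exact E.mgf_centeredCount_succ_le hd hp₀ hp₁ ha hn (abs_div_growth_le_one hb _ hσ)
    _ ≤ Real.exp ((growth b (n + 1))⁻¹ ^ 2) * mgf (E.centeredCount a n) P (σ / growth b n) := by
        gcongr
        exact mgf_nonneg

end FiniteMeasure

section Moments

variable [IsProbabilityMeasure P] (E : ERW G d p Ω P)

lemma mgf_centeredCount_le_exp (a : G) (n : ℕ) {θ : ℝ} (hθ : |θ| ≤ 1) :
    mgf (E.centeredCount a n) P θ ≤ Real.exp n := by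
  calc mgf (E.centeredCount a n) P θ ≤ ∫ _, Real.exp n ∂P := by
        refine integral_mono (E.integrable_comp_centeredCount (fun x => Real.exp (θ * x)) a n)
          (integrable_const _) fun ω => Real.exp_le_exp.2 ?_
        calc θ * E.centeredCount a n ω ≤ |θ| * |E.centeredCount a n ω| := by
              rw [← abs_mul]
              exact le_abs_self _
          _ ≤ 1 * n := mul_le_mul hθ (E.abs_centeredCount_le a n ω) (abs_nonneg _) one_pos.le
          _ = n := one_mul _
    _ = Real.exp n := by simp

lemma mgf_centeredCount_div_growth_le (hd : 2 ≤ d) (hp₀ : 0 ≤ p) (hp₁ : p ≤ 1)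
    (hb : 0 ≤ memoryExponent d p) {a : G} (ha : a ∈ E.S) (n : ℕ) {σ : ℝ} (hσ : |σ| ≤ 1) :
    mgf (E.centeredCount a n) P (σ / growth (memoryExponent d p) n)
      ≤ Real.exp (1 + ∑ k ∈ Finset.range (n + 1), (growth (memoryExponent d p) k)⁻¹ ^ 2) := by
  set b := memoryExponent d p
  have hbase : ∀ k ≤ 1, mgf (E.centeredCount a k) P (σ / growth b k)
      ≤ Real.exp (1 + ∑ j ∈ Finset.range (k + 1), (growth b j)⁻¹ ^ 2) := fun k hk =>
    (E.mgf_centeredCount_le_exp a k (abs_div_growth_le_one hb k hσ)).trans <|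
      Real.exp_le_exp.2 <| (Nat.cast_le_one.2 hk).trans <|
        le_add_of_nonneg_right <| Finset.sum_nonneg fun _ _ => sq_nonneg _
  rcases Nat.eq_zero_or_pos n with rfl | hn
  · exact hbase 0 zero_le_one
  induction n, hn using Nat.le_induction with
  | base => exact hbase 1 le_rfl
  | succ n hn ih =>
    calc mgf (E.centeredCount a (n + 1)) P (σ / growth b (n + 1))
        ≤ Real.exp ((growth b (n + 1))⁻¹ ^ 2)
          * Real.exp (1 + ∑ k ∈ Finset.range (n + 1), (growth b k)⁻¹ ^ 2) :=
          (E.mgf_centeredCount_div_growth_succ_le hd hp₀ hp₁ hb ha hn hσ).trans <|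
            mul_le_mul_of_nonneg_left ih (Real.exp_pos _).le
      _ = Real.exp (1 + ∑ k ∈ Finset.range (n + 1 + 1), (growth b k)⁻¹ ^ 2) := by
          rw [← Real.exp_add, Finset.sum_range_succ _ (n + 1)]
          ring_nf

/-- The bound `2d exp(1 + ∑ (growth b k)⁻²)`, with `b = memoryExponent d p`, on the exponential
moments of `Ξ_n` at scale `growth b n / n`. It is meaningful for `1/2 < b` only: otherwise the
series diverges and the `tsum` is `0`. -/
def momentBound (d : ℕ) (p : ℝ) : ℝ :=
  d * (2 * Real.exp (1 + ∑' k, (growth (memoryExponent d p) k)⁻¹ ^ 2))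

lemma one_le_momentBound (hd : 1 ≤ d) (p : ℝ) : 1 ≤ momentBound d p := by
  have hsum : 0 ≤ ∑' k, (growth (memoryExponent d p) k)⁻¹ ^ 2 := tsum_nonneg fun _ => sq_nonneg _
  have hexp := Real.one_le_exp (add_nonneg zero_le_one hsum)
  exact one_le_mul_of_one_le_of_one_le (by exact_mod_cast hd) (by linarith)

lemma integral_exp_abs_centeredCount_div_growth_le (hd : 2 ≤ d)
    (hpd : ((d : ℝ) + 1) / (2 * d) < p) (hp₁ : p ≤ 1) {a : G} (ha : a ∈ E.S) (n : ℕ) :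
    ∫ ω, Real.exp (|E.centeredCount a n ω| / growth (memoryExponent d p) n) ∂P
      ≤ 2 * Real.exp (1 + ∑' k, (growth (memoryExponent d p) k)⁻¹ ^ 2) := by
  have hp₀ : 0 ≤ p := le_trans (by positivity) hpd.le
  have hb := half_lt_memoryExponent hd hpd
  have hb₁ := memoryExponent_le_one hd hp₁
  set b := memoryExponent d p
  have hb₀ : 0 ≤ b := by linarith
  have hmgf : ∀ σ : ℝ, |σ| ≤ 1 → mgf (E.centeredCount a n) P (σ / growth b n)
      ≤ Real.exp (1 + ∑' k, (growth b k)⁻¹ ^ 2) := fun σ hσ => by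
    refine (E.mgf_centeredCount_div_growth_le hd hp₀ hp₁ hb₀ ha n hσ).trans ?_
    gcongr
    exact (summable_sq_inv_growth hb hb₁).sum_le_tsum _ fun _ _ => sq_nonneg _
  have hint : ∀ σ : ℝ, Integrable (fun ω => Real.exp (σ / growth b n * E.centeredCount a n ω)) P :=
    fun σ => E.integrable_comp_centeredCount (fun x => Real.exp (σ / growth b n * x)) a n
  have habs : ∀ x : ℝ, Real.exp (|x| / growth b n)
      ≤ Real.exp (1 / growth b n * x) + Real.exp (-1 / growth b n * x) := fun x => by
    have h := Real.exp_abs_le (x / growth b n)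
    rw [abs_div, abs_of_pos (growth_pos hb₀ n)] at h
    convert h using 3 <;> ring
  calc ∫ ω, Real.exp (|E.centeredCount a n ω| / growth b n) ∂P
      ≤ ∫ ω, Real.exp (1 / growth b n * E.centeredCount a n ω)
          + Real.exp (-1 / growth b n * E.centeredCount a n ω) ∂P :=
        integral_mono (E.integrable_comp_centeredCount (fun x => Real.exp (|x| / growth b n)) a n)
          ((hint 1).add (hint (-1))) fun ω => habs _
    _ = mgf (E.centeredCount a n) P (1 / growth b n)
          + mgf (E.centeredCount a n) P (-1 / growth b n) := integral_add (hint 1) (hint (-1))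
    _ ≤ 2 * Real.exp (1 + ∑' k, (growth b k)⁻¹ ^ 2) := by
        linarith [hmgf 1 (by simp), hmgf (-1) (by simp)]

lemma integral_exp_abs_XiTerm_le (hd : 2 ≤ d) (hpd : ((d : ℝ) + 1) / (2 * d) < p) (hp₁ : p ≤ 1)
    (k : ℕ) :
    ∫ ω, Real.exp (k * |E.XiTerm k ω| / growth (memoryExponent d p) k) ∂P ≤ momentBound d p := by
  have hb₀ : 0 ≤ memoryExponent d p := by linarith [half_lt_memoryExponent hd hpd]
  set b := memoryExponent d p
  have hint : ∀ a, Integrable (fun ω => Real.exp (|E.centeredCount a k ω| / growth b k)) P :=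
    E.integrable_comp_centeredCount (fun x => Real.exp (|x| / growth b k)) (n := k)
  have hpointwise : ∀ ω, Real.exp (k * |E.XiTerm k ω| / growth b k)
      ≤ ∑ a ∈ E.S, Real.exp (|E.centeredCount a k ω| / growth b k) := fun ω => by
    obtain ⟨a, ha, hle⟩ := E.exists_mul_abs_XiTerm_le k ω
    calc Real.exp (k * |E.XiTerm k ω| / growth b k)
        ≤ Real.exp (|E.centeredCount a k ω| / growth b k) :=
          Real.exp_le_exp.2 (div_le_div_of_nonneg_right hle (growth_pos hb₀ k).le)
      _ ≤ ∑ a ∈ E.S, Real.exp (|E.centeredCount a k ω| / growth b k) :=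
          Finset.single_le_sum (f := fun a => Real.exp (|E.centeredCount a k ω| / growth b k))
            (fun _ _ => (Real.exp_pos _).le) ha
  calc ∫ ω, Real.exp (k * |E.XiTerm k ω| / growth b k) ∂P
      ≤ ∫ ω, ∑ a ∈ E.S, Real.exp (|E.centeredCount a k ω| / growth b k) ∂P :=
        integral_mono (E.integrable_comp_XiTerm (fun x => Real.exp (k * |x| / growth b k)) k)
          (integrable_finsetSum _ fun a _ => hint a) hpointwise
    _ = ∑ a ∈ E.S, ∫ ω, Real.exp (|E.centeredCount a k ω| / growth b k) ∂P :=
        integral_finsetSum _ fun a _ => hint a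
    _ ≤ E.S.card • (2 * Real.exp (1 + ∑' j, (growth b j)⁻¹ ^ 2)) :=
        Finset.sum_le_card_nsmul _ _ _ fun a ha =>
          E.integral_exp_abs_centeredCount_div_growth_le hd hpd hp₁ ha k
    _ = momentBound d p := by rw [E.card_S, nsmul_eq_mul, momentBound]

lemma integral_exp_abs_Xi_le (hd : 2 ≤ d) (hpd : ((d : ℝ) + 1) / (2 * d) < p) (hp₁ : p ≤ 1)
    (n : ℕ) :
    ∫ ω, Real.exp (memoryExponent d p * n / growth (memoryExponent d p) n * |E.Xi n ω|) ∂P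
      ≤ momentBound d p := by
  have hb₀ : 0 ≤ memoryExponent d p := by linarith [half_lt_memoryExponent hd hpd]
  set b := memoryExponent d p
  have hgrowth := growth_pos hb₀ n
  have hweights : ∑ k ∈ Finset.range n, b * (growth b k / k) / growth b n ≤ 1 := by
    rw [← Finset.sum_div, sum_mul_growth_div, div_le_one hgrowth]
    linarith
  have hsum_int : Integrable (fun ω => Real.exp (∑ k ∈ Finset.range n,
      b * (growth b k / k) / growth b n * (k * |E.XiTerm k ω| / growth b k))) P :=
    E.integrable_of_factorsThrough (n := n) fun ω ω' h =>
      congrArg Real.exp <| Finset.sum_congr rfl fun k hk => by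
        rw [E.factorsThrough_XiTerm k
          (E.factorsThrough_steps_of_le (Finset.mem_range.1 hk).le h)]
  calc ∫ ω, Real.exp (b * n / growth b n * |E.Xi n ω|) ∂P
      ≤ ∫ ω, Real.exp (∑ k ∈ Finset.range n,
          b * (growth b k / k) / growth b n * (k * |E.XiTerm k ω| / growth b k)) ∂P :=
        integral_mono (E.integrable_comp_Xi (fun x => Real.exp (b * n / growth b n * |x|)) n)
          hsum_int fun ω => Real.exp_le_exp.2 (E.mul_abs_Xi_div_growth_le hb₀ n ω)
    _ ≤ momentBound d p :=
        integral_exp_sum_mul_le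
          (fun k _ => by have := growth_pos hb₀ k; positivity) hweights
          (fun k _ => E.integrable_comp_XiTerm (fun x => Real.exp (k * |x| / growth b k)) k)
          (one_le_momentBound (by omega) p) fun k _ => E.integral_exp_abs_XiTerm_le hd hpd hp₁ k

end Moments

end ERW

theorem erw_Xi_high_moments_supercritical_general
    {G : Type*} [Group G] [DecidableEq G] {Ω : Type*} [MeasurableSpace Ω]
    {P : Measure Ω} [IsProbabilityMeasure P]
    (d : ℕ) (hd : 2 ≤ d) (p : ℝ) (hpd : ((d : ℝ) + 1) / (2 * d) < p) (hp1 : p ≤ 1)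
    (E : ERW G d p Ω P) (m : ℝ) (hm : 0 < m) :
    ∃ C : ℝ, 0 < C ∧ ∀ n : ℕ, 1 ≤ n →
      ∫ ω, |E.Xi n ω| ^ m ∂P ≤ C * (n : ℝ) ^ (-(m * ((d : ℝ) * (1 - p) / ((d : ℝ) - 1)))) := by
  have hb := ERW.half_lt_memoryExponent hd hpd
  rw [← ERW.one_sub_memoryExponent hd]
  set b := ERW.memoryExponent d p
  have hb₀ : 0 < b := by linarith
  have hM : 0 < ERW.momentBound d p := one_pos.trans_le (ERW.one_le_momentBound (by omega) p)
  refine ⟨(m * (Real.exp b / b)) ^ m * ERW.momentBound d p, by positivity, fun n hn => ?_⟩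
  have hn' : (0 : ℝ) < n := by exact_mod_cast hn
  have hgrowth := ERW.growth_pos hb₀.le n
  have hscale : m / (b * n / ERW.growth b n) ≤ m * (Real.exp b / b) * (n : ℝ) ^ (b - 1) := by
    rw [Real.rpow_sub_one hn'.ne', div_div_eq_mul_div, div_le_iff₀ (by positivity)]
    have := ERW.growth_le_exp_mul_rpow hb₀.le hn
    calc m * ERW.growth b n ≤ m * (Real.exp b * (n : ℝ) ^ b) := by gcongr
      _ = _ := by field_simp
  calc ∫ ω, |E.Xi n ω| ^ m ∂P
      ≤ (m / (b * n / ERW.growth b n)) ^ m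
          * ∫ ω, Real.exp (b * n / ERW.growth b n * |E.Xi n ω|) ∂P :=
        integral_abs_rpow_le_mul_integral_exp (by positivity) hm.le
          (E.integrable_comp_Xi (fun x => Real.exp (b * n / ERW.growth b n * |x|)) n)
    _ ≤ (m * (Real.exp b / b) * (n : ℝ) ^ (b - 1)) ^ m * ERW.momentBound d p := by
        gcongr
        exact E.integral_exp_abs_Xi_le hd hpd hp1 n
    _ = (m * (Real.exp b / b)) ^ m * ERW.momentBound d p * (n : ℝ) ^ (-(m * (1 - b))) := by
        rw [Real.mul_rpow (by positivity) (by positivity), ← Real.rpow_mul hn'.le, mul_right_comm]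
        ring_nf

/-- higher moments of `Ξ n` in the supercritical regime
`p ∈ (p_d, 1)`, for `m > 2`: `E|Ξ n|^m ≤ C n^(-m d(1-p)/(d-1)) log n` if
`2 < m < (d-1)/(d(1-p))`; `E|Ξ n|^m ≤ C log n / n` if `m = (d-1)/(d(1-p))`;
and `E|Ξ n|^m ≤ C / n` if `m > (d-1)/(d(1-p))`. -/
theorem erw_Xi_high_moments_supercritical
    {G : Type*} [Group G] [DecidableEq G] {Ω : Type*} [MeasurableSpace Ω]
    {P : Measure Ω} [IsProbabilityMeasure P]
    (d : ℕ) (hd : 3 ≤ d) (p : ℝ) (hpd : ((d : ℝ) + 1) / (2 * d) < p) (hp1 : p < 1)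
    (E : ERW G d p Ω P) (m : ℝ) (hm : 2 < m) :
    (m < ((d : ℝ) - 1) / ((d : ℝ) * (1 - p)) →
      ∃ C : ℝ, 0 < C ∧ ∀ n : ℕ, 2 ≤ n →
        ∫ ω, |E.Xi n ω| ^ m ∂P ≤
          C * (n : ℝ) ^ (-(m * ((d : ℝ) * (1 - p) / ((d : ℝ) - 1)))) *
            Real.log n) ∧
    (m = ((d : ℝ) - 1) / ((d : ℝ) * (1 - p)) →
      ∃ C : ℝ, 0 < C ∧ ∀ n : ℕ, 2 ≤ n →
        ∫ ω, |E.Xi n ω| ^ m ∂P ≤ C * Real.log n / n) ∧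
    (((d : ℝ) - 1) / ((d : ℝ) * (1 - p)) < m →
      ∃ C : ℝ, 0 < C ∧ ∀ n : ℕ, 1 ≤ n →
        ∫ ω, |E.Xi n ω| ^ m ∂P ≤ C / n) := by
  have key := erw_Xi_high_moments_supercritical_general d (by omega) p hpd hp1.le E m (by linarith)
  have hd' : (3 : ℝ) ≤ d := by exact_mod_cast hd
  have hα : 0 < (d : ℝ) * (1 - p) / ((d : ℝ) - 1) :=
    div_pos (mul_pos (by linarith) (by linarith)) (by linarith)
  have hinv (h : ((d : ℝ) - 1) / ((d : ℝ) * (1 - p)) ≤ m) :=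
    exists_le_mul_inv_of_exists_le_mul_rpow_neg
      ((inv_le_iff_one_le_mul₀ hα).1 ((inv_div _ _).trans_le h)) key
  refine ⟨fun _ => exists_le_mul_log (fun n => by positivity) key, fun h => ?_, fun h => ?_⟩
  · simpa only [div_eq_mul_inv, mul_right_comm] using
      exists_le_mul_log (fun n => by positivity) (hinv h.ge)
  · simpa only [div_eq_mul_inv] using hinv h.le

end
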